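/- arXiv:2105.05608 — 3 statements merged into one kernel-verified Lean document; each statement's English description precedes it below -/
import Mathlib

section
/- Let E be a real inner product space, let α ∈ (0, π/2], and let s, y₀, y₁ ∈ E be unit vectors with y₀ and y₁ both orthogonal to s. Define x₀ = cos(α)·s + sin(α)·y₀ and x₁ = cos(α)·s + sin(α)·y₁. Then θ(y₀, y₁) ≤ 2·arcsin(1/(2·sin α)) if and only if θ(x₀, x₁) ≤ π/3. -/
open Real
open scoped InnerProductSpace

/-- Proposition `theta_star`: for unit vectors `y₀, y₁` orthogonal to the unit vector `s`
(the residual vectors), and `x_i = cos α • s + sin α • y_i` the corresponding points on the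
border of a filter of center `s` and angle `α ∈ (0, π/2]`, the angle between the residual
vectors is at most `θ*_α = 2 arcsin (1/(2 sin α))` iff the angle between `x₀` and `x₁` is at
most `π/3`. -/
theorem stmt_0 {E : Type*} [NormedAddCommGroup E] [InnerProductSpace ℝ E]
    (α : ℝ) (hα0 : 0 < α) (hα : α ≤ π / 2)
    (s y₀ y₁ : E) (hs : ‖s‖ = 1) (hy₀ : ‖y₀‖ = 1) (hy₁ : ‖y₁‖ = 1)
    (hy₀s : ⟪y₀, s⟫_ℝ = 0) (hy₁s : ⟪y₁, s⟫_ℝ = 0)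
    (x₀ x₁ : E)
    (hx₀ : x₀ = cos α • s + sin α • y₀)
    (hx₁ : x₁ = cos α • s + sin α • y₁) :
    InnerProductGeometry.angle y₀ y₁ ≤ 2 * arcsin (1 / (2 * sin α)) ↔
      InnerProductGeometry.angle x₀ x₁ ≤ π / 3 := by
  have hsin : 0 < sin α := sin_pos_of_pos_of_lt_pi hα0 (by linarith [pi_pos])
  have hsc := sin_sq_add_cos_sq α
  have hs' : ⟪s, s⟫_ℝ = 1 := by rw [real_inner_self_eq_norm_sq, hs]; norm_num
  have h0 : ⟪y₀, y₀⟫_ℝ = 1 := by rw [real_inner_self_eq_norm_sq, hy₀]; norm_num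
  have h1 : ⟪y₁, y₁⟫_ℝ = 1 := by rw [real_inner_self_eq_norm_sq, hy₁]; norm_num
  have hsy₀ : ⟪s, y₀⟫_ℝ = 0 := by rw [real_inner_comm]; exact hy₀s
  have hsy₁ : ⟪s, y₁⟫_ℝ = 0 := by rw [real_inner_comm]; exact hy₁s
  have key : ∀ u v : E, ⟪u, s⟫_ℝ = 0 → ⟪s, v⟫_ℝ = 0 →
      ⟪cos α • s + sin α • u, cos α • s + sin α • v⟫_ℝ
        = cos α ^ 2 + sin α ^ 2 * ⟪u, v⟫_ℝ := by
    intro u v hu hv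
    simp only [inner_add_left, inner_add_right, real_inner_smul_left, real_inner_smul_right,
      hu, hv, hs']
    ring
  have n0 : ‖x₀‖ = 1 := by
    have h := key y₀ y₀ hy₀s hsy₀
    rw [← hx₀, h0, real_inner_self_eq_norm_sq] at h
    nlinarith [norm_nonneg x₀]
  have n1 : ‖x₁‖ = 1 := by
    have h := key y₁ y₁ hy₁s hsy₁
    rw [← hx₁, h1, real_inner_self_eq_norm_sq] at h
    nlinarith [norm_nonneg x₁]
  have hin := key y₀ y₁ hy₀s hsy₁
  rw [← hx₀, ← hx₁] at hin
  have cx : cos (InnerProductGeometry.angle x₀ x₁) = ⟪x₀, x₁⟫_ℝ := by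
    rw [InnerProductGeometry.cos_angle, n0, n1]; simp
  have cy : cos (InnerProductGeometry.angle y₀ y₁) = ⟪y₀, y₁⟫_ℝ := by
    rw [InnerProductGeometry.cos_angle, hy₀, hy₁]; simp
  have hn := InnerProductGeometry.angle_nonneg y₀ y₁
  have hp := InnerProductGeometry.angle_le_pi y₀ y₁
  rw [← cy] at hin
  rw [hin] at cx
  have hR : InnerProductGeometry.angle x₀ x₁ ≤ π / 3 ↔
      1 / 2 ≤ cos (InnerProductGeometry.angle x₀ x₁) := by
    rw [← cos_pi_div_three]
    exact (strictAntiOn_cos.le_iff_ge ⟨by positivity, by linarith [pi_pos]⟩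
      ⟨InnerProductGeometry.angle_nonneg _ _, InnerProductGeometry.angle_le_pi _ _⟩).symm
  rw [hR, cx]
  generalize InnerProductGeometry.angle y₀ y₁ = φ at *
  have e1 : φ ≤ 2 * arcsin (1 / (2 * sin α)) ↔ φ / 2 ≤ arcsin (1 / (2 * sin α)) := by
    constructor <;> intro h <;> linarith
  rw [e1, le_arcsin_iff_sin_le' ⟨by linarith [pi_pos], by linarith⟩,
    le_div_iff₀ (by positivity)]
  have hh : 0 ≤ sin (φ / 2) := sin_nonneg_of_nonneg_of_le_pi (by linarith) (by linarith)
  have hc : cos φ = 1 - 2 * sin (φ / 2) ^ 2 := by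
    have h2 := cos_two_mul (φ / 2)
    rw [mul_div_cancel₀ φ two_ne_zero] at h2
    have := sin_sq_add_cos_sq (φ / 2)
    linarith
  rw [hc]
  have e2 : cos α ^ 2 + sin α ^ 2 * (1 - 2 * sin (φ / 2) ^ 2)
      = 1 - (sin (φ / 2) * (2 * sin α)) ^ 2 / 2 := by
    linear_combination hsc
  rw [e2]
  have hq : 0 ≤ sin (φ / 2) * (2 * sin α) := by positivity
  constructor <;> intro h <;> nlinarith
end

section
/- Let d ≥ 3, let s be a unit vector in ℝ^d, let α ∈ [π/3, π/2], and set θ*_α := 2·arcsin(1/(2·sin α)). Let ν be the rotation-invariant (uniform) probability measure on the sphere S_s := {y ∈ ℝ^d : ‖y‖ = 1 and ⟪y, s⟫ = 0} of unit vectors orthogonal to s. If y₀ and y₁ are independent random vectors each distributed according to ν, and x_i := cos(α)·s + sin(α)·y_i for i = 0, 1, then ℙ[‖x₀ − x₁‖ ≤ 1] = ν{y ∈ S_s : ⟪y, y'⟫ ≥ cos θ*_α} for any fixed y' ∈ S_s. -/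
open MeasureTheory ProbabilityTheory Real
open scoped InnerProductSpace

/-- Corollary `delta`: for `d ≥ 3`, a unit vector `s ∈ ℝ^d`, `α ∈ [π/3, π/2]` and
`θ*_α = 2 arcsin (1/(2 sin α))`, if `y₀, y₁` are independent random unit vectors
orthogonal to `s`, each distributed according to the rotation-invariant probability
measure `ν` on the sphere `S_s` of unit vectors orthogonal to `s`, and
`x_i = cos α • s + sin α • y_i`, then the probability that the pair reduces,
i.e. `‖x₀ - x₁‖ ≤ 1`, equals the relative volume `ν{y : ⟪y, y'⟫ ≥ cos θ*_α}` of a cap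
of angle `θ*_α` of `S_s`, for any fixed `y' ∈ S_s`. -/
theorem stmt_9 (d : ℕ) (hd : 3 ≤ d)
    (s : EuclideanSpace ℝ (Fin d)) (hs : ‖s‖ = 1)
    (α : ℝ) (hα : α ∈ Set.Icc (π / 3) (π / 2))
    (θs : ℝ) (hθs : θs = 2 * arcsin (1 / (2 * sin α)))
    (ν : Measure {y : EuclideanSpace ℝ (Fin d) // ‖y‖ = 1 ∧ ⟪y, s⟫_ℝ = 0})
    [IsProbabilityMeasure ν]
    (hrot : ∀ f : EuclideanSpace ℝ (Fin d) ≃ₗᵢ[ℝ] EuclideanSpace ℝ (Fin d), f s = s →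
      ∀ A : Set (EuclideanSpace ℝ (Fin d)), MeasurableSet A →
        ν {y | (y : EuclideanSpace ℝ (Fin d)) ∈ A} =
          ν {y | f (y : EuclideanSpace ℝ (Fin d)) ∈ A})
    (Ω : Type) [MeasureSpace Ω] [IsProbabilityMeasure (ℙ : Measure Ω)]
    (y₀ y₁ : Ω → {y : EuclideanSpace ℝ (Fin d) // ‖y‖ = 1 ∧ ⟪y, s⟫_ℝ = 0})
    (hm₀ : Measurable y₀) (hm₁ : Measurable y₁) (hind : IndepFun y₀ y₁ ℙ)
    (hd₀ : Measure.map y₀ ℙ = ν) (hd₁ : Measure.map y₁ ℙ = ν)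
    (x₀ x₁ : Ω → EuclideanSpace ℝ (Fin d))
    (hx₀ : ∀ ω, x₀ ω = cos α • s + sin α • (y₀ ω : EuclideanSpace ℝ (Fin d)))
    (hx₁ : ∀ ω, x₁ ω = cos α • s + sin α • (y₁ ω : EuclideanSpace ℝ (Fin d)))
    (y' : {y : EuclideanSpace ℝ (Fin d) // ‖y‖ = 1 ∧ ⟪y, s⟫_ℝ = 0}) :
    ℙ {ω | ‖x₀ ω - x₁ ω‖ ≤ 1} =
      ν {y | cos θs ≤
        ⟪(y : EuclideanSpace ℝ (Fin d)), (y' : EuclideanSpace ℝ (Fin d))⟫_ℝ} := by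
  have hsin : 1 / 2 ≤ sin α := by
    have h1 : sin (π / 3) ≤ sin α :=
      sin_le_sin_of_le_of_le_pi_div_two (by linarith [pi_pos]) hα.2 hα.1
    have h2 : (0:ℝ) < π / 6 := by positivity
    have h3 : sin (π / 6) ≤ sin (π / 3) :=
      sin_le_sin_of_le_of_le_pi_div_two (by linarith [pi_pos]) (by linarith [pi_pos])
        (by linarith [pi_pos])
    rw [sin_pi_div_six] at h3
    linarith
  have hpos : 0 < sin α := by linarith
  have hcos : cos θs = 1 - 2 * (1 / (2 * sin α)) ^ 2 := by
    have hu : 1 / (2 * sin α) ≤ 1 := by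
      rw [div_le_one (by positivity)]; linarith
    have hu0 : 0 ≤ 1 / (2 * sin α) := by positivity
    rw [hθs, cos_two_mul, cos_sq', sin_arcsin (by linarith) hu]
    ring
  set c := cos θs with hc
  have hset : {ω | ‖x₀ ω - x₁ ω‖ ≤ 1} = (fun ω => (y₀ ω, y₁ ω)) ⁻¹'
      {p | c ≤ ⟪(p.2 : EuclideanSpace ℝ (Fin d)), (p.1 : EuclideanSpace ℝ (Fin d))⟫_ℝ} := by
    ext ω
    have e : x₀ ω - x₁ ω = sin α • ((y₀ ω : EuclideanSpace ℝ (Fin d)) - y₁ ω) := by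
      rw [hx₀, hx₁, smul_sub]; abel
    have e2 : ‖x₀ ω - x₁ ω‖ ^ 2 = sin α ^ 2 * (2 - 2 *
        ⟪(y₁ ω : EuclideanSpace ℝ (Fin d)), (y₀ ω : EuclideanSpace ℝ (Fin d))⟫_ℝ) := by
      rw [e, norm_smul, mul_pow, norm_sub_sq_real, (y₀ ω).2.1, (y₁ ω).2.1, real_inner_comm,
        norm_eq_abs, sq_abs]
      ring
    simp only [Set.mem_setOf_eq, Set.mem_preimage]
    rw [← sq_le_one_iff₀ (norm_nonneg _), e2, hcos]
    have e3 : 2 * (1 / (2 * sin α)) ^ 2 = (1 / sin α ^ 2) / 2 := by field_simp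
    rw [e3, ← le_div_iff₀' (by positivity)]
    constructor <;> intro h <;> linarith
  have hmeas : MeasurableSet {p : {y : EuclideanSpace ℝ (Fin d) // ‖y‖ = 1 ∧ ⟪y, s⟫_ℝ = 0} ×
      {y : EuclideanSpace ℝ (Fin d) // ‖y‖ = 1 ∧ ⟪y, s⟫_ℝ = 0} |
      c ≤ ⟪(p.2 : EuclideanSpace ℝ (Fin d)), (p.1 : EuclideanSpace ℝ (Fin d))⟫_ℝ} := by
    apply measurableSet_le measurable_const
    exact (measurable_subtype_coe.comp measurable_snd).inner
      (measurable_subtype_coe.comp measurable_fst)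
  have hslice : ∀ z : {y : EuclideanSpace ℝ (Fin d) // ‖y‖ = 1 ∧ ⟪y, s⟫_ℝ = 0},
      ν {y | c ≤ ⟪(y : EuclideanSpace ℝ (Fin d)), (z : EuclideanSpace ℝ (Fin d))⟫_ℝ} =
      ν {y | c ≤ ⟪(y : EuclideanSpace ℝ (Fin d)), (y' : EuclideanSpace ℝ (Fin d))⟫_ℝ} := by
    intro z
    set f := (ℝ ∙ ((z : EuclideanSpace ℝ (Fin d)) - y'))ᗮ.reflection with hf
    have hfz : f z = y' := Submodule.reflection_sub (by rw [z.2.1, y'.2.1])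
    have hfs : f s = s := by
      apply Submodule.reflection_mem_subspace_eq_self
      rw [Submodule.mem_orthogonal_singleton_iff_inner_right, inner_sub_left, z.2.2, y'.2.2,
        sub_zero]
    have h := hrot f hfs {v | c ≤ ⟪v, (y' : EuclideanSpace ℝ (Fin d))⟫_ℝ}
      (measurableSet_le measurable_const (measurable_id.inner measurable_const))
    simp only [Set.mem_setOf_eq] at h
    rw [h]
    congr 1
    ext y
    simp only [Set.mem_setOf_eq]
    rw [← hfz, f.inner_map_map]
  rw [hset, ← Measure.map_apply (hm₀.prodMk hm₁) hmeas,
    (indepFun_iff_map_prod_eq_prod_map_map hm₀.aemeasurable hm₁.aemeasurable).1 hind,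
    hd₀, hd₁, Measure.prod_apply hmeas]
  simp only [Set.preimage_setOf_eq]
  simp only [hslice, lintegral_const, measure_univ, mul_one]
end

section
/- Fix α ∈ (0, π/2) and θ ∈ (0, π) such that 2·cos²(α) < 1 + cos(θ). For each dimension d ≥ 2, let μ_d be the rotation-invariant (uniform) probability measure on the unit sphere S^{d−1} ⊂ ℝ^d, let e₀, e₁ be two fixed orthonormal vectors, and set u = e₀ and w = cos(θ)·e₀ + sin(θ)·e₁ (so θ(u, w) = θ). Let W_d(α, θ) := μ_d{x ∈ S^{d−1} : ⟪x, u⟫ ≥ cos α and ⟪x, w⟫ ≥ cos α} be the relative volume of the wedge H_{u,α} ∩ H_{w,α}. Then (W_d(α, θ))^{1/d} → (1 − 2·cos²(α)/(1 + cos θ))^{1/2} as d → ∞. -/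
open MeasureTheory Real Filter
open scoped InnerProductSpace

lemma aux_conc {d : ℕ} (m : Measure (EuclideanSpace ℝ (Fin d))) [IsFiniteMeasure m]
    (hm : ∀ f : EuclideanSpace ℝ (Fin d) ≃ₗᵢ[ℝ] EuclideanSpace ℝ (Fin d),
      ∀ A, MeasurableSet A → m (f ⁻¹' A) = m A)
    (B : OrthonormalBasis (Fin d) ℝ (EuclideanSpace ℝ (Fin d))) (i0 i1 : Fin d)
    (D : Set (EuclideanSpace ℝ (Fin d))) (hD : MeasurableSet D)
    (hsub : D ⊆ Metric.closedBall 0 1)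
    (hinv : ∀ j ≠ i0, ∀ y, B.equiv B (Equiv.swap i1 j) y ∈ D ↔ y ∈ D)
    (δ : ℝ) (hδ : 0 < δ) :
    ((d : ℝ) - 1) * (δ ^ 2 * m.real (D ∩ {y | δ < |⟪B i1, y⟫_ℝ|})) ≤ m.real D := by
  have hSm : ∀ j, MeasurableSet (D ∩ {y | δ < |⟪B j, y⟫_ℝ|}) := fun j =>
    hD.inter (measurableSet_lt measurable_const (by fun_prop))
  have hS : ∀ j ≠ i0, m.real (D ∩ {y | δ < |⟪B j, y⟫_ℝ|})
      = m.real (D ∩ {y | δ < |⟪B i1, y⟫_ℝ|}) := by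
    intro j hj
    unfold Measure.real
    rw [← hm (B.equiv B (Equiv.swap i1 j)) _ (hSm j)]
    congr 2
    ext y
    have : B j = B.equiv B (Equiv.swap i1 j) (B i1) := by simp
    simp only [Set.mem_preimage, Set.mem_inter_iff, hinv j hj, Set.mem_ofPred_eq]
    rw [this, LinearIsometryEquiv.inner_map_map]
  have h1 : ((d : ℝ) - 1) * (δ ^ 2 * m.real (D ∩ {y | δ < |⟪B i1, y⟫_ℝ|}))
      = ∑ j ∈ Finset.univ.erase i0, δ ^ 2 * m.real (D ∩ {y | δ < |⟪B j, y⟫_ℝ|}) := by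
    rw [Finset.sum_congr rfl (fun j hj => by rw [hS j (Finset.ne_of_mem_erase hj)])]
    rw [Finset.sum_const, Finset.card_erase_of_mem (Finset.mem_univ _)]
    have : 1 ≤ d := by have := i0.2; omega
    simp [Nat.cast_sub this]
  have h2 : ∀ j, δ ^ 2 * m.real (D ∩ {y | δ < |⟪B j, y⟫_ℝ|})
      = ∫ y, (D ∩ {y | δ < |⟪B j, y⟫_ℝ|}).indicator (fun _ => δ ^ 2) y ∂m := by
    intro j
    rw [integral_indicator_const _ (hSm j), smul_eq_mul, mul_comm]
  have hint : ∀ j, Integrable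
      ((D ∩ {y | δ < |⟪B j, y⟫_ℝ|}).indicator (fun _ => δ ^ 2)) m := fun j =>
    (integrable_const _).indicator (hSm j)
  rw [h1, Finset.sum_congr rfl (fun j _ => h2 j), ← integral_finsetSum _ (fun j _ => hint j)]
  have h3 : m.real D = ∫ y, D.indicator (fun _ => (1:ℝ)) y ∂m := by
    rw [integral_indicator_const _ hD]; simp
  rw [h3]
  refine integral_mono (integrable_finsetSum _ (fun j _ => hint j))
    ((integrable_const _).indicator hD) ?_
  intro y
  by_cases hy : y ∈ D
  · simp only [Set.indicator_of_mem hy]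
    have hn : ‖y‖ ≤ 1 := by simpa using hsub hy
    calc ∑ j ∈ Finset.univ.erase i0, (D ∩ {y | δ < |⟪B j, y⟫_ℝ|}).indicator (fun _ => δ ^ 2) y
        ≤ ∑ j ∈ Finset.univ.erase i0, ⟪B j, y⟫_ℝ ^ 2 := by
          refine Finset.sum_le_sum fun j _ => ?_
          by_cases h : y ∈ D ∩ {y | δ < |⟪B j, y⟫_ℝ|}
          · rw [Set.indicator_of_mem h, ← sq_abs ⟪B j, y⟫_ℝ]
            have := h.2
            simp only [Set.mem_ofPred_eq] at this
            gcongr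
          · rw [Set.indicator_of_notMem h]; positivity
      _ ≤ ∑ j, ⟪B j, y⟫_ℝ ^ 2 :=
          Finset.sum_le_sum_of_subset_of_nonneg (Finset.erase_subset _ _)
            (fun _ _ _ => by positivity)
      _ = ‖y‖ ^ 2 := by
          have := B.sum_sq_norm_inner_right y
          simpa using this
      _ ≤ 1 := by nlinarith [norm_nonneg y]
  · simp [hy]

lemma aux_iso {d : ℕ} (v w : EuclideanSpace ℝ (Fin d)) (h : ‖v‖ = ‖w‖) :
    ∃ f : EuclideanSpace ℝ (Fin d) ≃ₗᵢ[ℝ] EuclideanSpace ℝ (Fin d), f v = w :=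
  ⟨_, Submodule.reflection_sub h⟩

lemma aux_fub {d : ℕ} (m : Measure (EuclideanSpace ℝ (Fin d))) [IsProbabilityMeasure m]
    (hm : ∀ f : EuclideanSpace ℝ (Fin d) ≃ₗᵢ[ℝ] EuclideanSpace ℝ (Fin d),
      ∀ A, MeasurableSet A → m (f ⁻¹' A) = m A)
    (v : EuclideanSpace ℝ (Fin d)) (hv : ‖v‖ = 1) (ρ : ℝ)
    (A : Set (EuclideanSpace ℝ (Fin d))) (hA : MeasurableSet A) (h0 : 0 ∉ A) :
    m {x | ρ ≤ ⟪v, x⟫_ℝ} * volume A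
      = ∫⁻ x, volume (A ∩ {y | ρ * ‖y‖ ≤ ⟪y, x⟫_ℝ}) ∂m := by
  set S : Set (EuclideanSpace ℝ (Fin d) × EuclideanSpace ℝ (Fin d)) :=
    {p | p.2 ∈ A ∧ ρ * ‖p.2‖ ≤ ⟪p.2, p.1⟫_ℝ} with hSdef
  have hS : MeasurableSet S := by
    have h1 : MeasurableSet {p : EuclideanSpace ℝ (Fin d) × EuclideanSpace ℝ (Fin d) |
        ρ * ‖p.2‖ ≤ ⟪p.2, p.1⟫_ℝ} := measurableSet_le (by fun_prop) (by fun_prop)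
    exact (measurable_snd hA).inter h1
  have e1 : (m.prod volume) S = ∫⁻ x, volume (A ∩ {y | ρ * ‖y‖ ≤ ⟪y, x⟫_ℝ}) ∂m := by
    rw [Measure.prod_apply hS]; rfl
  have e2 : (m.prod volume) S = ∫⁻ y, m ((fun x => (x, y)) ⁻¹' S) := by
    rw [Measure.prod_apply_symm hS]
  rw [← e1, e2]
  have : ∀ y, m ((fun x => (x, y)) ⁻¹' S)
      = A.indicator (fun _ => m {x | ρ ≤ ⟪v, x⟫_ℝ}) y := by
    intro y
    by_cases hy : y ∈ A
    · rw [Set.indicator_of_mem hy]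
      have hy0 : y ≠ 0 := fun h => h0 (h ▸ hy)
      have hny : 0 < ‖y‖ := norm_pos_iff.2 hy0
      obtain ⟨f, hf⟩ := aux_iso (‖y‖ • v) y (by rw [norm_smul, hv]; simp)
      have hms : MeasurableSet ((fun x => (x, y)) ⁻¹' S) := measurable_prodMk_right hS
      rw [← hm f _ hms]
      congr 1
      ext x
      simp only [hSdef, Set.mem_preimage, Set.mem_ofPred_eq, hy, true_and]
      conv_lhs => rw [← hf, LinearIsometryEquiv.inner_map_map, hf, real_inner_smul_left, mul_comm]
      exact mul_le_mul_iff_right₀ hny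
    · rw [Set.indicator_of_notMem hy]
      have : (fun x => (x, y)) ⁻¹' S = ∅ := by
        ext x; simp [hSdef, hy]
      rw [this, measure_empty]
  simp_rw [this]
  rw [lintegral_indicator_const hA]

lemma aux_upper {d : ℕ} (hd : 1 ≤ d) (m : Measure (EuclideanSpace ℝ (Fin d)))
    [IsProbabilityMeasure m]
    (hm : ∀ f : EuclideanSpace ℝ (Fin d) ≃ₗᵢ[ℝ] EuclideanSpace ℝ (Fin d),
      ∀ A, MeasurableSet A → m (f ⁻¹' A) = m A)
    (hsp : ∀ᵐ x ∂m, ‖x‖ = 1)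
    (v : EuclideanSpace ℝ (Fin d)) (hv : ‖v‖ = 1) (ρ R t : ℝ) (hρ : 0 ≤ ρ)
    (hR : 0 ≤ R) (hRρ : R ^ 2 = 1 - ρ ^ 2) (ht : 0 ≤ t) (ht1 : t < 1)
    (htρ : 2 * ρ ^ 2 - 1 ≤ t) :
    m.real {x | ρ ≤ ⟪v, x⟫_ℝ} * (1 - t) ≤ R ^ d := by
  set A : Set (EuclideanSpace ℝ (Fin d)) := Metric.closedBall 0 1 \ Metric.closedBall 0 t with hAdef
  have hA : MeasurableSet A := measurableSet_closedBall.diff measurableSet_closedBall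
  have hF := aux_fub m hm v hv ρ A hA (by simp [hAdef, ht])
  have hle : m {x | ρ ≤ ⟪v, x⟫_ℝ} * volume A
      ≤ volume (Metric.closedBall (0 : EuclideanSpace ℝ (Fin d)) R) := by
    rw [hF]
    calc _ ≤ ∫⁻ x, volume (Metric.closedBall (0 : EuclideanSpace ℝ (Fin d)) R) ∂m := by
          refine lintegral_mono_ae ?_
          filter_upwards [hsp] with x hx
          rw [← Measure.addHaar_closedBall_center volume (ρ • x) R]
          refine measure_mono ?_
          rintro y ⟨⟨hy1, hy2⟩, hy3⟩
          simp only [Metric.mem_closedBall, dist_zero_right, not_le, Set.mem_ofPred_eq] at hy1 hy2 hy3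
          rw [Metric.mem_closedBall, dist_eq_norm]
          refine abs_le_of_sq_le_sq' ?_ hR |>.2
          rw [norm_sub_sq_real, norm_smul, hx, real_inner_smul_right, hRρ, mul_one,
            Real.norm_eq_abs, sq_abs]
          nlinarith [mul_le_mul_of_nonneg_left hy3 hρ,
            mul_nonneg (sub_nonneg.2 hy1) (sub_nonneg.2 (htρ.trans hy2.le))]
      _ = _ := by simp
  have hVA : volume.real A = (1 - t ^ d) *
      volume.real (Metric.closedBall (0 : EuclideanSpace ℝ (Fin d)) 1) := by
    rw [hAdef, measureReal_sdiff (Metric.closedBall_subset_closedBall ht1.le)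
      measurableSet_closedBall measure_closedBall_lt_top.ne, Measure.addHaar_real_closedBall' volume _ ht]
    simp; ring
  have hV : 0 < volume.real (Metric.closedBall (0 : EuclideanSpace ℝ (Fin d)) 1) :=
    ENNReal.toReal_pos (Metric.measure_closedBall_pos _ _ one_pos).ne' measure_closedBall_lt_top.ne
  have h2 := ENNReal.toReal_mono measure_closedBall_lt_top.ne hle
  rw [ENNReal.toReal_mul] at h2
  change m.real _ * volume.real A ≤ volume.real _ at h2
  rw [hVA, Measure.addHaar_real_closedBall' volume _ hR, ← mul_assoc] at h2
  have h3 := le_of_mul_le_mul_right h2 hV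
  simp only [finrank_euclideanSpace, Fintype.card_fin] at h3
  refine le_trans ?_ h3
  have : t ^ d ≤ t := pow_le_of_le_one ht ht1.le (by omega)
  gcongr

lemma aux_lower {d : ℕ} (hd : 2 ≤ d) (m : Measure (EuclideanSpace ℝ (Fin d)))
    [IsProbabilityMeasure m]
    (hm : ∀ f : EuclideanSpace ℝ (Fin d) ≃ₗᵢ[ℝ] EuclideanSpace ℝ (Fin d),
      ∀ A, MeasurableSet A → m (f ⁻¹' A) = m A)
    (hsp : ∀ᵐ x ∂m, ‖x‖ = 1)
    (v : EuclideanSpace ℝ (Fin d)) (hv : ‖v‖ = 1) (ρ₁ ρ R η : ℝ) (hρ1 : 0 ≤ ρ₁)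
    (hρ : ρ ≤ 1)
    (hR : 0 ≤ R) (hRρ : R ^ 2 = 1 - ρ ^ 2) (hη : 0 < η) (hηρ : η < ρ)
    (hcmp : ρ₁ * (1 + η) ≤ ρ - η) (hdη : 2 ≤ ((d : ℝ) - 1) * η ^ 2) :
    1 / 2 * R ^ d ≤ (1 + η) ^ d * m.real {x | ρ₁ ≤ ⟪v, x⟫_ℝ} := by
  have hR1 : R ≤ 1 := by nlinarith
  set A : Set (EuclideanSpace ℝ (Fin d)) := Metric.closedBall 0 (1 + η) \ {0} with hAdef
  have hA : MeasurableSet A := measurableSet_closedBall.diff (measurableSet_singleton _)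
  have hF := aux_fub m hm v hv ρ₁ A hA (by simp [hAdef])
  have hV : 0 < volume.real (Metric.closedBall (0 : EuclideanSpace ℝ (Fin d)) 1) :=
    ENNReal.toReal_pos (Metric.measure_closedBall_pos _ _ one_pos).ne' measure_closedBall_lt_top.ne
  -- the slab estimate
  have hslab : ∀ x : EuclideanSpace ℝ (Fin d), ‖x‖ = 1 →
      1 / 2 * R ^ d * volume.real (Metric.closedBall (0 : EuclideanSpace ℝ (Fin d)) 1) ≤
      volume.real (Metric.closedBall (0 : EuclideanSpace ℝ (Fin d)) R \ {z | η < |⟪x, z⟫_ℝ|}) := by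
    intro x hx
    obtain ⟨B, hB⟩ := Orthonormal.exists_orthonormalBasis_extension_of_card_eq (𝕜 := ℝ)
      (E := EuclideanSpace ℝ (Fin d)) (ι := Fin d) (by simp) (v := fun _ => x)
      (s := {⟨1, hd⟩}) (by
        refine ⟨fun i => hx, fun i j hij => absurd (Subsingleton.elim i j) hij⟩)
    have hBx := hB ⟨1, hd⟩ rfl
    have hinv : ∀ f : EuclideanSpace ℝ (Fin d) ≃ₗᵢ[ℝ] EuclideanSpace ℝ (Fin d), ∀ A,
        MeasurableSet A → (volume.restrict (Metric.closedBall 0 1)) (f ⁻¹' A)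
          = (volume.restrict (Metric.closedBall 0 1)) A := by
      intro f A hA
      rw [Measure.restrict_apply (f.continuous.measurable hA), Measure.restrict_apply hA,
        ← f.measurePreserving.measure_preimage
          (hA.inter measurableSet_closedBall).nullMeasurableSet]
      congr 1
      ext y; simp
    have : IsFiniteMeasure
        ((volume : Measure (EuclideanSpace ℝ (Fin d))).restrict (Metric.closedBall 0 1)) :=
      ⟨by rw [Measure.restrict_apply_univ]; exact measure_closedBall_lt_top⟩
    have hc := aux_conc (volume.restrict (Metric.closedBall 0 1)) hinv B ⟨0, by omega⟩ ⟨1, hd⟩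
      (Metric.closedBall 0 R) measurableSet_closedBall
      (Metric.closedBall_subset_closedBall hR1) (fun j _ y => by simp) η hη
    rw [hBx] at hc
    have hres : ∀ T, MeasurableSet T → T ⊆ Metric.closedBall 0 1 →
        (volume.restrict (Metric.closedBall (0 : EuclideanSpace ℝ (Fin d)) 1)).real T
          = volume.real T := by
      intro T hT hTs
      unfold Measure.real
      rw [Measure.restrict_apply hT, Set.inter_eq_left.2 hTs]
    have hbad : MeasurableSet {z : EuclideanSpace ℝ (Fin d) | η < |⟪x, z⟫_ℝ|} :=
      measurableSet_lt measurable_const (by fun_prop)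
    rw [hres _ (measurableSet_closedBall.inter hbad)
      (Set.inter_subset_left.trans (Metric.closedBall_subset_closedBall hR1)),
      hres _ measurableSet_closedBall (Metric.closedBall_subset_closedBall hR1)] at hc
    have hsum := measureReal_inter_add_sdiff (μ := volume)
      (s := Metric.closedBall (0 : EuclideanSpace ℝ (Fin d)) R) hbad
      measure_closedBall_lt_top.ne
    have hvR := Measure.addHaar_real_closedBall' volume (0 : EuclideanSpace ℝ (Fin d)) hR
    simp only [finrank_euclideanSpace, Fintype.card_fin] at hvR
    have hnn : 0 ≤ volume.real (Metric.closedBall (0 : EuclideanSpace ℝ (Fin d)) R ∩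
      {z | η < |⟪x, z⟫_ℝ|}) := measureReal_nonneg
    nlinarith [mul_le_mul_of_nonneg_right hdη hnn]
  have hle : ENNReal.ofReal (1 / 2 * R ^ d *
      volume.real (Metric.closedBall (0 : EuclideanSpace ℝ (Fin d)) 1)) ≤
      m {x | ρ₁ ≤ ⟪v, x⟫_ℝ} * volume A := by
    rw [hF]
    calc _ = ∫⁻ x, ENNReal.ofReal (1 / 2 * R ^ d *
          volume.real (Metric.closedBall (0 : EuclideanSpace ℝ (Fin d)) 1)) ∂m := by simp
      _ ≤ _ := by
          refine lintegral_mono_ae ?_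
          filter_upwards [hsp] with x hx
          refine (ENNReal.ofReal_le_ofReal (hslab x hx)).trans ?_
          refine ENNReal.ofReal_toReal_le.trans ?_
          rw [← measure_preimage_add volume (-(ρ • x))
            (Metric.closedBall (0 : EuclideanSpace ℝ (Fin d)) R \ {z | η < |⟪x, z⟫_ℝ|})]
          refine measure_mono ?_
          rintro y ⟨hy1, hy2⟩
          obtain ⟨z, rfl⟩ : ∃ z, y = ρ • x + z := ⟨y - ρ • x, by abel⟩
          simp only [Metric.mem_closedBall, dist_zero_right, not_lt, Set.mem_ofPred_eq,
            neg_add_cancel_left] at hy1 hy2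
          have hz := abs_le.1 hy2
          have hin : ⟪ρ • x + z, x⟫_ℝ = ρ + ⟪x, z⟫_ℝ := by
            rw [inner_add_left, real_inner_smul_left, real_inner_self_eq_norm_sq, hx,
              real_inner_comm]; ring
          have hno : ‖ρ • x + z‖ ≤ 1 + η := by
            refine abs_le_of_sq_le_sq' ?_ (by linarith) |>.2
            rw [norm_add_sq_real, norm_smul, hx, real_inner_smul_left, mul_one,
              Real.norm_eq_abs, sq_abs]
            nlinarith [mul_nonneg (hη.le.trans hηρ.le) (sub_nonneg.2 hz.2), norm_nonneg z]
          refine ⟨⟨by simpa using hno, ?_⟩, ?_⟩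
          · intro h0
            rw [Set.mem_singleton_iff] at h0
            rw [h0, inner_zero_left] at hin
            linarith
          · change ρ₁ * _ ≤ _
            rw [hin]
            nlinarith [mul_le_mul_of_nonneg_left hno hρ1]
  have hAle : volume A ≤ volume (Metric.closedBall (0 : EuclideanSpace ℝ (Fin d)) (1 + η)) :=
    measure_mono Set.sdiff_subset
  have hle2 := hle.trans (mul_le_mul_right hAle _)
  have h2 := ENNReal.toReal_mono
    (ENNReal.mul_ne_top (measure_ne_top m _) measure_closedBall_lt_top.ne) hle2
  rw [ENNReal.toReal_mul, ENNReal.toReal_ofReal (by positivity)] at h2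
  change _ ≤ m.real _ * volume.real _ at h2
  rw [Measure.addHaar_real_closedBall' volume _ (by linarith : 0 ≤ 1 + η), ← mul_assoc] at h2
  have h3 := le_of_mul_le_mul_right h2 hV
  simp only [finrank_euclideanSpace, Fintype.card_fin] at h3
  linarith

/-- wedge inside a cap, and large part of a cap inside the wedge -/
lemma aux_slice {d : ℕ} (hd : 2 ≤ d) (m : Measure (EuclideanSpace ℝ (Fin d)))
    [IsProbabilityMeasure m]
    (hm : ∀ f : EuclideanSpace ℝ (Fin d) ≃ₗᵢ[ℝ] EuclideanSpace ℝ (Fin d),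
      ∀ A, MeasurableSet A → m (f ⁻¹' A) = m A)
    (hsp : ∀ᵐ x ∂m, ‖x‖ = 1)
    (v v' : EuclideanSpace ℝ (Fin d)) (hv : ‖v‖ = 1) (hv' : ‖v'‖ = 1) (hvv : ⟪v, v'⟫_ℝ = 0)
    (ρ δ : ℝ) (hδ : 0 < δ) (hdδ : 2 ≤ ((d : ℝ) - 1) * δ ^ 2) :
    1 / 2 * m.real {x | ρ ≤ ⟪v, x⟫_ℝ} ≤ m.real {x | ρ ≤ ⟪v, x⟫_ℝ ∧ |⟪v', x⟫_ℝ| ≤ δ} := by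
  obtain ⟨B, hB⟩ := Orthonormal.exists_orthonormalBasis_extension_of_card_eq (𝕜 := ℝ)
    (E := EuclideanSpace ℝ (Fin d)) (ι := Fin d) (by simp)
    (v := fun i => if i.1 = 0 then v else v')
    (s := {⟨0, by omega⟩, ⟨1, hd⟩}) (by
      refine ⟨?_, ?_⟩
      · rintro ⟨i, rfl | rfl⟩ <;> simp [hv, hv']
      · rintro ⟨i, rfl | rfl⟩ ⟨j, rfl | rfl⟩ hij <;> simp_all [real_inner_comm])
  have hB0 : B ⟨0, by omega⟩ = v := by simpa using hB ⟨0, by omega⟩ (by simp)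
  have hB1 : B ⟨1, hd⟩ = v' := by simpa using hB ⟨1, hd⟩ (by simp)
  set C : Set (EuclideanSpace ℝ (Fin d)) := {x | ρ ≤ ⟪v, x⟫_ℝ} with hC
  have hCm : MeasurableSet C := measurableSet_le measurable_const (by fun_prop)
  have hbad : MeasurableSet {z : EuclideanSpace ℝ (Fin d) | δ < |⟪v', z⟫_ℝ|} :=
    measurableSet_lt measurable_const (by fun_prop)
  have hc := aux_conc m hm B ⟨0, by omega⟩ ⟨1, hd⟩ (C ∩ Metric.closedBall 0 1)
    (hCm.inter measurableSet_closedBall) Set.inter_subset_right (by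
      intro j hj y
      have hfix : B.equiv B (Equiv.swap ⟨1, hd⟩ j) v = v := by
        rw [← hB0, OrthonormalBasis.equiv_apply_basis,
          Equiv.swap_apply_of_ne_of_ne (by simp) hj.symm]
      have : ⟪v, B.equiv B (Equiv.swap ⟨1, hd⟩ j) y⟫_ℝ = ⟪v, y⟫_ℝ := by
        conv_lhs => rw [← hfix, LinearIsometryEquiv.inner_map_map]
      simp [hC, this]) δ hδ
  rw [hB1] at hc
  have hae : ∀ T : Set (EuclideanSpace ℝ (Fin d)), m.real (T ∩ Metric.closedBall 0 1) = m.real T := by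
    intro T
    refine measureReal_congr ?_
    filter_upwards [hsp] with x hx
    refine propext ⟨fun h => h.1, fun h => ⟨h, by simp [hx]⟩⟩
  rw [Set.inter_right_comm, hae, hae] at hc
  have hsum := measureReal_inter_add_sdiff (μ := m) (s := C) hbad
  have hset : {x | ρ ≤ ⟪v, x⟫_ℝ ∧ |⟪v', x⟫_ℝ| ≤ δ} = C \ {z | δ < |⟪v', z⟫_ℝ|} := by
    ext x; simp [hC]
  rw [hset]
  have hnn : 0 ≤ m.real (C ∩ {z | δ < |⟪v', z⟫_ℝ|}) := measureReal_nonneg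
  nlinarith [mul_le_mul_of_nonneg_right hdδ hnn]

lemma aux_root (K g : ℝ) (hK : 0 < K) (hg : 0 ≤ g) :
    Tendsto (fun d : ℕ => (K * g ^ d) ^ ((1 : ℝ) / d)) atTop (nhds g) := by
  have h1 : Tendsto (fun d : ℕ => K ^ ((1 : ℝ) / d) * g) atTop (nhds (K ^ (0 : ℝ) * g)) :=
    (Tendsto.rpow tendsto_const_nhds tendsto_one_div_atTop_nhds_zero_nat (Or.inl hK.ne')).mul_const g
  rw [rpow_zero, one_mul] at h1
  refine h1.congr' ?_
  filter_upwards [eventually_ge_atTop 1] with d hd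
  rw [mul_rpow hK.le (by positivity), one_div, pow_rpow_inv_natCast hg (by omega)]

lemma aux_tendsto (P : ℕ → ℝ) (R K : ℝ) (hR : 0 ≤ R) (hK : 0 < K)
    (hP : ∀ d, 0 ≤ P d) (hU : ∀ᶠ d in atTop, P d ≤ K * R ^ d)
    (hL : ∀ a < R, ∃ g > a, 0 ≤ g ∧ ∃ k > 0, ∀ᶠ d in atTop, k * g ^ d ≤ P d) :
    Tendsto (fun d : ℕ => P d ^ ((1 : ℝ) / d)) atTop (nhds R) := by
  refine tendsto_order.2 ⟨fun a ha => ?_, fun a ha => ?_⟩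
  · obtain ⟨g, hga, hg, k, hk, h⟩ := hL a ha
    filter_upwards [h, (aux_root k g hk hg).eventually_const_lt hga] with d h1 h2
    exact h2.trans_le (rpow_le_rpow (by positivity) h1 (by positivity))
  · filter_upwards [hU, (aux_root K R hK hR).eventually_lt_const ha] with d h1 h2
    exact (rpow_le_rpow (hP d) h1 (by positivity)).trans_lt h2

lemma aux_wedge {d : ℕ} (hd : 2 ≤ d) (m : Measure (EuclideanSpace ℝ (Fin d)))
    [IsProbabilityMeasure m]
    (hm : ∀ f : EuclideanSpace ℝ (Fin d) ≃ₗᵢ[ℝ] EuclideanSpace ℝ (Fin d),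
      ∀ A, MeasurableSet A → m (f ⁻¹' A) = m A)
    (hsp : ∀ᵐ x ∂m, ‖x‖ = 1)
    (v v' u w : EuclideanSpace ℝ (Fin d)) (hv : ‖v‖ = 1) (hv' : ‖v'‖ = 1) (hvv : ⟪v, v'⟫_ℝ = 0)
    (c s ρ : ℝ) (hc : 0 < c) (hs0 : 0 ≤ s) (hs1 : s ≤ 1) (hρ0 : 0 < ρ) (hρ1 : ρ < 1)
    (hu : u = c • v - s • v') (hw : w = c • v + s • v') :
    m.real {x | c * ρ ≤ ⟪x, u⟫_ℝ ∧ c * ρ ≤ ⟪x, w⟫_ℝ} ≤ (1 - ρ ^ 2)⁻¹ * √(1 - ρ ^ 2) ^ d ∧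
    ∀ τ > 0, ρ + 2 * τ < 1 → 2 ≤ ((d : ℝ) - 1) * (c * τ) ^ 2 → 2 ≤ ((d : ℝ) - 1) * (τ / 2) ^ 2 →
      1 / 4 * (√(1 - (ρ + 2 * τ) ^ 2) / (1 + τ / 2)) ^ d ≤
        m.real {x | c * ρ ≤ ⟪x, u⟫_ℝ ∧ c * ρ ≤ ⟪x, w⟫_ℝ} := by
  have hxu : ∀ x, ⟪x, u⟫_ℝ = c * ⟪v, x⟫_ℝ - s * ⟪v', x⟫_ℝ := by
    intro x; rw [hu, inner_sub_right, real_inner_smul_right, real_inner_smul_right,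
      real_inner_comm v, real_inner_comm v']
  have hxw : ∀ x, ⟪x, w⟫_ℝ = c * ⟪v, x⟫_ℝ + s * ⟪v', x⟫_ℝ := by
    intro x; rw [hw, inner_add_right, real_inner_smul_right, real_inner_smul_right,
      real_inner_comm v, real_inner_comm v']
  have hpos : 0 < 1 - ρ ^ 2 := by nlinarith
  constructor
  · have h := aux_upper (by omega) m hm hsp v hv ρ (√(1 - ρ ^ 2)) (ρ ^ 2) hρ0.le (by positivity)
      (Real.sq_sqrt hpos.le) (by positivity) (by linarith) (by nlinarith)
    have hle : m.real {x | c * ρ ≤ ⟪x, u⟫_ℝ ∧ c * ρ ≤ ⟪x, w⟫_ℝ} ≤ m.real {x | ρ ≤ ⟪v, x⟫_ℝ} := by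
      refine measureReal_mono ?_
      rintro x ⟨h1, h2⟩
      rw [hxu] at h1
      rw [hxw] at h2
      change ρ ≤ _
      exact le_of_mul_le_mul_left (by linarith) hc
    rw [inv_mul_eq_div, le_div_iff₀ hpos]
    exact (mul_le_mul_of_nonneg_right hle hpos.le).trans h
  · intro τ hτ hτ1 hd1 hd2
    have h1 := aux_slice hd m hm hsp v v' hv hv' hvv (ρ + τ) (c * τ) (by positivity) hd1
    have h2 := aux_lower hd m hm hsp v hv (ρ + τ) (ρ + 2 * τ) (√(1 - (ρ + 2 * τ) ^ 2)) (τ / 2)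
      (by linarith) hτ1.le (by positivity) (Real.sq_sqrt (by nlinarith)) (by linarith)
      (by linarith) (by nlinarith) hd2
    have hle : m.real {x | ρ + τ ≤ ⟪v, x⟫_ℝ ∧ |⟪v', x⟫_ℝ| ≤ c * τ} ≤
        m.real {x | c * ρ ≤ ⟪x, u⟫_ℝ ∧ c * ρ ≤ ⟪x, w⟫_ℝ} := by
      refine measureReal_mono ?_
      rintro x ⟨h1, h2⟩
      have h3 := mul_le_mul_of_nonneg_left h1 hc.le
      have h4 : |s * ⟪v', x⟫_ℝ| ≤ c * τ := by
        rw [abs_mul, abs_of_nonneg hs0]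
        nlinarith [abs_nonneg ⟪v', x⟫_ℝ]
      have h5 := abs_le.1 h4
      refine ⟨?_, ?_⟩
      · rw [hxu]; linarith
      · rw [hxw]; linarith
    rw [div_pow, ← mul_div_assoc, div_le_iff₀ (by positivity)]
    have hk : 0 < (1 + τ / 2) ^ d := by positivity
    nlinarith [mul_le_mul_of_nonneg_right (h1.trans hle) hk.le]

/-- Asymptotic form of the wedge-volume formula
`W_d(α, θ) = poly(d) · (1 - 2 cos²α/(1 + cos θ))^{d/2}`: for fixed `α ∈ (0, π/2)` and
`θ ∈ (0, π)` with `2 cos²α < 1 + cos θ`, if for each `d ≥ 2` the measure `μ d` is the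
rotation-invariant probability measure on the unit sphere of `ℝ^d`, `e₀ d, e₁ d` are
orthonormal, `u = e₀` and `w = cos θ • e₀ + sin θ • e₁` (so that `θ(u, w) = θ`), then the
relative volume `W_d(α, θ)` of the wedge `H_{u,α} ∩ H_{w,α}` satisfies
`W_d(α, θ)^(1/d) → (1 - 2 cos²α/(1 + cos θ))^{1/2}` as `d → ∞`. -/
theorem stmt_11 (α θ : ℝ) (hα : α ∈ Set.Ioo 0 (π / 2)) (hθ : θ ∈ Set.Ioo 0 π)
    (hcond : 2 * cos α ^ 2 < 1 + cos θ)
    (μ : ∀ d : ℕ, Measure (Metric.sphere (0 : EuclideanSpace ℝ (Fin d)) 1))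
    (hprob : ∀ d, 2 ≤ d → IsProbabilityMeasure (μ d))
    (hrot : ∀ d, 2 ≤ d →
      ∀ f : EuclideanSpace ℝ (Fin d) ≃ₗᵢ[ℝ] EuclideanSpace ℝ (Fin d),
      ∀ A : Set (EuclideanSpace ℝ (Fin d)), MeasurableSet A →
        μ d {x | (x : EuclideanSpace ℝ (Fin d)) ∈ A} =
          μ d {x | f (x : EuclideanSpace ℝ (Fin d)) ∈ A})
    (e₀ e₁ : ∀ d : ℕ, EuclideanSpace ℝ (Fin d))
    (he : ∀ d, 2 ≤ d → ‖e₀ d‖ = 1 ∧ ‖e₁ d‖ = 1 ∧ ⟪e₀ d, e₁ d⟫_ℝ = 0)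
    (w : ∀ d : ℕ, EuclideanSpace ℝ (Fin d))
    (hw : ∀ d, w d = cos θ • e₀ d + sin θ • e₁ d) :
    Tendsto (fun d : ℕ =>
        ((μ d) {x | cos α ≤ ⟪(x : EuclideanSpace ℝ (Fin d)), e₀ d⟫_ℝ ∧
            cos α ≤ ⟪(x : EuclideanSpace ℝ (Fin d)), w d⟫_ℝ}).toReal ^ ((1 : ℝ) / d))
      atTop (nhds (Real.sqrt (1 - 2 * cos α ^ 2 / (1 + cos θ)))) := by
  have hθ2 : θ / 2 ∈ Set.Ioo 0 (π / 2) := ⟨by linarith [hθ.1], by linarith [hθ.2]⟩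
  have hc : 0 < cos (θ / 2) := cos_pos_of_mem_Ioo ⟨by linarith [hθ2.1, pi_pos], hθ2.2⟩
  have hs : 0 < sin (θ / 2) := sin_pos_of_pos_of_lt_pi hθ2.1 (by linarith [hθ2.2, pi_pos])
  have hcα : 0 < cos α := cos_pos_of_mem_Ioo ⟨by linarith [hα.1, pi_pos], hα.2⟩
  have hcs := sin_sq_add_cos_sq (θ / 2)
  have hcθ : cos θ = 2 * cos (θ / 2) ^ 2 - 1 := by rw [← cos_two_mul]; ring_nf
  have hsθ : sin θ = 2 * sin (θ / 2) * cos (θ / 2) := by rw [← sin_two_mul]; ring_nf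
  generalize cos (θ / 2) = c at hc hcs hcθ hsθ
  generalize sin (θ / 2) = s at hs hcs hsθ
  obtain ⟨ρ, hρ⟩ : ∃ ρ, ρ = cos α / c := ⟨_, rfl⟩
  have hcρ : cos α = c * ρ := by rw [hρ]; field_simp
  have hρ0 : 0 < ρ := by rw [hρ]; positivity
  have hρ1 : ρ < 1 := by
    rw [hρ, div_lt_one hc]
    nlinarith
  have hlim : 1 - 2 * cos α ^ 2 / (1 + cos θ) = 1 - ρ ^ 2 := by
    rw [hcθ, hcρ]; field_simp; ring
  rw [hlim]
  have hkey : ∀ d, 2 ≤ d →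
      ((μ d) {x | cos α ≤ ⟪(x : EuclideanSpace ℝ (Fin d)), e₀ d⟫_ℝ ∧
            cos α ≤ ⟪(x : EuclideanSpace ℝ (Fin d)), w d⟫_ℝ}).toReal ≤
          (1 - ρ ^ 2)⁻¹ * √(1 - ρ ^ 2) ^ d ∧
      ∀ τ > 0, ρ + 2 * τ < 1 → 2 ≤ ((d : ℝ) - 1) * (c * τ) ^ 2 →
        2 ≤ ((d : ℝ) - 1) * (τ / 2) ^ 2 →
        1 / 4 * (√(1 - (ρ + 2 * τ) ^ 2) / (1 + τ / 2)) ^ d ≤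
        ((μ d) {x | cos α ≤ ⟪(x : EuclideanSpace ℝ (Fin d)), e₀ d⟫_ℝ ∧
            cos α ≤ ⟪(x : EuclideanSpace ℝ (Fin d)), w d⟫_ℝ}).toReal := by
    intro d hd
    have := hprob d hd
    obtain ⟨h0, h1, h01⟩ := he d hd
    have hval : Measurable (Subtype.val : Metric.sphere (0 : EuclideanSpace ℝ (Fin d)) 1 → _) :=
      measurable_subtype_coe
    have hprobm : IsProbabilityMeasure ((μ d).map Subtype.val) :=
      Measure.isProbabilityMeasure_map hval.aemeasurable
    have h10 : ⟪e₁ d, e₀ d⟫_ℝ = 0 := by rw [real_inner_comm]; exact h01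
    have n0 : ⟪e₀ d, e₀ d⟫_ℝ = 1 := by rw [real_inner_self_eq_norm_sq, h0]; norm_num
    have n1 : ⟪e₁ d, e₁ d⟫_ℝ = 1 := by rw [real_inner_self_eq_norm_sq, h1]; norm_num
    have key := aux_wedge hd ((μ d).map Subtype.val) (by
        intro f A hA
        rw [Measure.map_apply hval (f.continuous.measurable hA), Measure.map_apply hval hA]
        exact (hrot d hd f A hA).symm) (by
        rw [ae_map_iff hval.aemeasurable (measurableSet_eq_fun (by fun_prop) (by fun_prop))]
        exact Eventually.of_forall fun x => by simp)
      (c • e₀ d + s • e₁ d) ((-s) • e₀ d + c • e₁ d) (e₀ d) (w d)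
      (by
        rw [← sq_eq_sq₀ (norm_nonneg _) zero_le_one, ← real_inner_self_eq_norm_sq]
        simp only [inner_add_left, inner_add_right, real_inner_smul_left, real_inner_smul_right,
          h01, h10, n0, n1]
        linarith)
      (by
        rw [← sq_eq_sq₀ (norm_nonneg _) zero_le_one, ← real_inner_self_eq_norm_sq]
        simp only [inner_add_left, inner_add_right, real_inner_smul_left, real_inner_smul_right,
          h01, h10, n0, n1]
        linarith)
      (by
        simp only [inner_add_left, inner_add_right, real_inner_smul_left, real_inner_smul_right,
          h01, h10, n0, n1]
        ring)
      c s ρ hc hs.le (by nlinarith) hρ0 hρ1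
      (by
        have : c * c + s * s = 1 := by linarith
        calc e₀ d = (c * c + s * s) • e₀ d := by rw [this, one_smul]
          _ = _ := by module)
      (by
        have h2 : cos θ = c * c - s * s := by rw [hcθ]; linarith
        rw [hw, h2, hsθ]; module)
    have hmap : ((μ d).map Subtype.val).real
        {x | c * ρ ≤ ⟪x, e₀ d⟫_ℝ ∧ c * ρ ≤ ⟪x, w d⟫_ℝ} =
        ((μ d) {x | cos α ≤ ⟪(x : EuclideanSpace ℝ (Fin d)), e₀ d⟫_ℝ ∧
            cos α ≤ ⟪(x : EuclideanSpace ℝ (Fin d)), w d⟫_ℝ}).toReal := by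
      have hm1 : MeasurableSet {x : EuclideanSpace ℝ (Fin d) | c * ρ ≤ ⟪x, e₀ d⟫_ℝ} :=
        measurableSet_le measurable_const (by fun_prop)
      have hm2 : MeasurableSet {x : EuclideanSpace ℝ (Fin d) | c * ρ ≤ ⟪x, w d⟫_ℝ} :=
        measurableSet_le measurable_const (by fun_prop)
      unfold Measure.real
      have hm3 : MeasurableSet {x : EuclideanSpace ℝ (Fin d) |
          c * ρ ≤ ⟪x, e₀ d⟫_ℝ ∧ c * ρ ≤ ⟪x, w d⟫_ℝ} := hm1.inter hm2
      rw [Measure.map_apply hval hm3, hcρ]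
      rfl
    rw [hmap] at key
    exact key
  have hpos : 0 < 1 - ρ ^ 2 := by nlinarith
  refine aux_tendsto _ (√(1 - ρ ^ 2)) (1 - ρ ^ 2)⁻¹ (by positivity) (by positivity)
    (fun d => ENNReal.toReal_nonneg) ?_ ?_
  · filter_upwards [eventually_ge_atTop 2] with d hd
    exact (hkey d hd).1
  · intro a ha
    have hcont : Tendsto (fun τ : ℝ => √(1 - (ρ + 2 * τ) ^ 2) / (1 + τ / 2)) (nhds 0)
        (nhds (√(1 - ρ ^ 2))) := by
      have : ContinuousAt (fun τ : ℝ => √(1 - (ρ + 2 * τ) ^ 2) / (1 + τ / 2)) 0 := by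
        refine ContinuousAt.div (by fun_prop) (by fun_prop) (by norm_num)
      have h := this.tendsto
      simpa using h
    have hcont2 : Tendsto (fun τ : ℝ => ρ + 2 * τ) (nhds 0) (nhds ρ) := by
      have : Continuous (fun τ : ℝ => ρ + 2 * τ) := by fun_prop
      simpa using this.tendsto 0
    have hev := (hcont.eventually_const_lt ha).and (hcont2.eventually_lt_const hρ1)
    obtain ⟨τ, ⟨hτa, hτ1⟩, hτ0⟩ := ((hev.filter_mono nhdsWithin_le_nhds).and
      (self_mem_nhdsWithin : Set.Ioi (0 : ℝ) ∈ nhdsWithin 0 (Set.Ioi 0))).exists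
    have hτ0 : 0 < τ := hτ0
    refine ⟨_, hτa, by positivity, 1 / 4, by norm_num, ?_⟩
    have hdiv : ∀ q : ℝ, 0 < q → ∀ᶠ d : ℕ in atTop, 2 ≤ ((d : ℝ) - 1) * q := by
      intro q hq
      have : Tendsto (fun d : ℕ => ((d : ℝ) - 1) * q) atTop atTop :=
        (tendsto_atTop_add_const_right _ (-1) tendsto_natCast_atTop_atTop).atTop_mul_const hq
      exact this.eventually_ge_atTop 2
    filter_upwards [eventually_ge_atTop 2, hdiv ((c * τ) ^ 2) (by positivity),
      hdiv ((τ / 2) ^ 2) (by positivity)] with d hd h1 h2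
    exact (hkey d hd).2 τ hτ0 hτ1 h1 h2
end
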